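/- Let B_1 and B_2 be finite Blaschke products of the same degree n such that B_1' and B_2' have exactly the same zeros in the open unit disk 𝔻, with the same multiplicities. Then B_2 = T ∘ B_1 for some conformal automorphism T of 𝔻. -/

import Mathlib

open Metric Filter

/-- The order of vanishing of `f` at `z`. -/
noncomputable def vOrder (f : ℂ → ℂ) (z : ℂ) : ℕ∞ :=
  sInf ((fun n : ℕ => (n : ℕ∞)) '' {n : ℕ | iteratedDeriv n f z ≠ 0})

open Topology

theorem polarize (R : MvPolynomial (Fin 2) ℂ)
    (h : ∀ z : ℂ, ‖z‖ < 1 → MvPolynomial.eval ![z, (starRingEnd ℂ) z] R = 0) (z w : ℂ) :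
    MvPolynomial.eval ![z, w] R = 0 := by
  set g : Fin 2 → MvPolynomial (Fin 2) ℂ :=
    ![MvPolynomial.X 0 + MvPolynomial.C Complex.I * MvPolynomial.X 1,
      MvPolynomial.X 0 - MvPolynomial.C Complex.I * MvPolynomial.X 1] with hg
  have key : ∀ x : Fin 2 → ℂ, MvPolynomial.eval x (MvPolynomial.bind₁ g R)
      = MvPolynomial.eval ![x 0 + Complex.I * x 1, x 0 - Complex.I * x 1] R := by
    intro x
    rw [MvPolynomial.eval, MvPolynomial.eval₂Hom_bind₁]
    congr 2
    funext i
    fin_cases i <;> simp [hg]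
  have h0 : MvPolynomial.bind₁ g R = 0 := by
    apply MvPolynomial.funext_set (fun _ => (fun t : ℝ => (t : ℂ)) '' Set.Ioo (-(1/2)) (1/2))
    · intro i
      exact (Set.Ioo_infinite (by norm_num)).image (Complex.ofReal_injective.injOn)
    · intro x hx
      rw [key]
      obtain ⟨s, hs, hs'⟩ := hx 0 (Set.mem_univ _)
      obtain ⟨t, ht, ht'⟩ := hx 1 (Set.mem_univ _)
      simp only at hs' ht'
      rw [← hs', ← ht', map_zero]
      have := h (s + Complex.I * t) ?_
      · convert this using 3
        simp [sub_eq_add_neg]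
      · refine lt_of_le_of_lt (norm_add_le _ _) ?_
        simp only [norm_mul, Complex.norm_I, Complex.norm_real, one_mul, Real.norm_eq_abs]
        have h1 : |s| < 1/2 := abs_lt.2 hs
        have h2 : |t| < 1/2 := abs_lt.2 ht
        linarith
  have := key ![(z + w)/2, (z - w)/(2*Complex.I)]
  rw [h0, map_zero] at this
  rw [this]
  congr 2
  funext i
  have hI := Complex.I_ne_zero
  fin_cases i <;> simp <;> field_simp <;> ring

theorem localM (f1 f2 h : ℂ → ℂ) (z0 : ℂ) (hf1 : AnalyticAt ℂ f1 z0) (hf2 : AnalyticAt ℂ f2 z0)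
    (hh : AnalyticAt ℂ h z0) (h1 : f1 z0 = 0) (h2 : f2 z0 = 0)
    (hd : ∀ᶠ z in 𝓝 z0, deriv f1 z = h z * deriv f2 z) (hgt : 1 < ‖h z0‖)
    (hnc : ¬ ∀ᶠ z in 𝓝 z0, f2 z = 0)
    (hmax : ∀ᶠ z in 𝓝 z0, ‖h z‖ * (1 - ‖f2 z‖^2) ≤ ‖h z0‖ * (1 - ‖f1 z‖^2)) : False := by
  obtain ⟨k, g, hg, hg0, hfg⟩ := (AnalyticAt.exists_eventuallyEq_pow_smul_nonzero_iff hf2).2 hnc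
  -- bounds
  set φ : ℂ → ℂ := fun z => f1 z - h z * f2 z with hφ
  have hg0' : 0 < ‖g z0‖ := norm_pos_iff.2 hg0
  have e1 : ∀ᶠ z in 𝓝 z0, ‖g z0‖ / 2 < ‖g z‖ :=
    hg.continuousAt.norm.eventually (lt_mem_nhds (by linarith))
  have e2 : ∀ᶠ z in 𝓝 z0, ‖g z‖ < ‖g z0‖ + 1 :=
    hg.continuousAt.norm.eventually (gt_mem_nhds (by linarith))
  have e3 : ∀ᶠ z in 𝓝 z0, ‖deriv h z‖ < ‖deriv h z0‖ + 1 :=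
    hh.deriv.continuousAt.norm.eventually (gt_mem_nhds (by linarith))
  set m := (‖h z0‖ + 1) / 2 with hm
  have e4 : ∀ᶠ z in 𝓝 z0, m < ‖h z‖ :=
    hh.continuousAt.norm.eventually (lt_mem_nhds (by simp only [hm]; linarith))
  set C := (‖deriv h z0‖ + 1) * (‖g z0‖ + 1) with hC
  have hCpos : 0 < C := by positivity
  have e5 : ∀ᶠ z in 𝓝 z0, DifferentiableAt ℂ φ z ∧ ‖deriv φ z‖ ≤ C * ‖z - z0‖ ^ k := by
    filter_upwards [e2, e3, hfg, hd, hf1.eventually_analyticAt, hf2.eventually_analyticAt,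
      hh.eventually_analyticAt] with z a b c d h1 h2 h3
    have hdφ : HasDerivAt φ (deriv f1 z - (deriv h z * f2 z + h z * deriv f2 z)) z :=
      h1.differentiableAt.hasDerivAt.sub
        (h3.differentiableAt.hasDerivAt.mul h2.differentiableAt.hasDerivAt)
    refine ⟨hdφ.differentiableAt, ?_⟩
    rw [hdφ.deriv, d]
    have : h z * deriv f2 z - (deriv h z * f2 z + h z * deriv f2 z) = - (deriv h z * f2 z) := by ring
    rw [this, norm_neg, norm_mul, c, norm_smul, norm_pow, hC]
    calc ‖deriv h z‖ * (‖z - z0‖ ^ k * ‖g z‖) ≤ (‖deriv h z0‖ + 1) * (‖z - z0‖ ^ k * (‖g z0‖ + 1)) := by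
          gcongr
      _ = _ := by ring
  obtain ⟨r, hr, hball⟩ := Metric.eventually_nhds_iff_ball.1 e5
  have e6 : ∀ᶠ z in 𝓝 z0, ‖φ z‖ ≤ C * ‖z - z0‖ ^ k * ‖z - z0‖ := by
    filter_upwards [Metric.ball_mem_nhds z0 hr] with z hz
    have hsub : ∀ x ∈ closedBall z0 ‖z - z0‖, x ∈ ball z0 r := by
      intro x hx
      rw [mem_closedBall] at hx
      rw [mem_ball, dist_eq_norm] at hz
      exact mem_ball.2 (lt_of_le_of_lt hx hz)
    have := (convex_closedBall z0 ‖z - z0‖).norm_image_sub_le_of_norm_deriv_le (𝕜 := ℂ)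
      (f := φ) (C := C * ‖z - z0‖ ^ k) (x := z0) (y := z)
      (fun x hx => (hball x (hsub x hx)).1) (fun x hx => by
        refine (hball x (hsub x hx)).2.trans ?_
        rw [mem_closedBall, dist_eq_norm] at hx
        gcongr)
      (mem_closedBall_self (norm_nonneg _)) (by rw [mem_closedBall, dist_eq_norm])
    simpa [hφ, h1, h2] using this
  have e7 : ∀ᶠ z in 𝓝 z0, C * ‖z - z0‖ < (m - 1) * (‖g z0‖ / 2) := by
    have hc : ContinuousAt (fun z : ℂ => C * ‖z - z0‖) z0 := by fun_prop
    apply hc.eventually (gt_mem_nhds _)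
    simp only [sub_self, norm_zero, mul_zero]
    have : 0 < m - 1 := by simp only [hm]; linarith
    positivity
  have e8 : ∀ᶠ z in 𝓝 z0, z ≠ z0 → ‖f2 z‖ < ‖f1 z‖ := by
    filter_upwards [e1, e4, e6, e7, hfg] with z a b c d e hz
    have hp : 0 < ‖z - z0‖ ^ k := pow_pos (norm_pos_iff.2 (sub_ne_zero.2 hz)) k
    have hn2 : ‖f2 z‖ = ‖z - z0‖ ^ k * ‖g z‖ := by rw [e, norm_smul, norm_pow]
    have : ‖h z * f2 z‖ ≤ ‖f1 z‖ + ‖φ z‖ := by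
      have : h z * f2 z = f1 z - φ z := by simp [hφ]
      rw [this]; exact norm_sub_le _ _
    rw [norm_mul] at this
    have t1 : m * ‖f2 z‖ ≤ ‖h z‖ * ‖f2 z‖ := by gcongr
    have t2 : ‖z - z0‖ ^ k * (C * ‖z - z0‖) < ‖z - z0‖ ^ k * ((m - 1) * (‖g z0‖ / 2)) := by gcongr
    have hm1 : 0 < m - 1 := by simp only [hm]; linarith
    have t3 : ‖z - z0‖ ^ k * ((m - 1) * (‖g z0‖ / 2)) ≤ ‖z - z0‖ ^ k * ((m - 1) * ‖g z‖) := by gcongr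
    nlinarith
  have hpos1 : ∀ᶠ z in 𝓝 z0, ‖f1 z‖ < 1 :=
    hf1.continuousAt.norm.eventually (gt_mem_nhds (by simp [h1]))
  have e9 : ∀ᶠ z in 𝓝 z0, z ≠ z0 → ‖h z‖ < ‖h z0‖ := by
    filter_upwards [e8, hmax, hpos1] with z a b c hz
    have a := a hz
    by_contra hcon
    push Not at hcon
    have p1 : ‖f2 z‖^2 < ‖f1 z‖^2 := by gcongr
    have p2 : ‖f1 z‖^2 < 1 := by nlinarith [norm_nonneg (f1 z)]
    nlinarith
  have hlm : IsLocalMax (norm ∘ h) z0 := by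
    filter_upwards [e9] with z hz
    by_cases hzz : z = z0
    · rw [hzz]
    · exact (hz hzz).le
  have hconst := Complex.eventually_eq_of_isLocalMax_norm
    (hh.eventually_analyticAt.mono fun z hz => hz.differentiableAt) hlm
  have : ∀ᶠ z in 𝓝 z0, z = z0 := by
    filter_upwards [hconst, e9] with z a b
    by_contra hz
    have := b hz
    rw [a] at this
    exact lt_irrefl _ this
  have hne : (𝓝[≠] z0).NeBot := inferInstance
  have := (this.filter_mono (nhdsWithin_le_nhds (s := {z0}ᶜ))).and self_mem_nhdsWithin
  obtain ⟨z, hz1, hz2⟩ := this.exists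
  exact hz2 hz1

theorem mob_id (a w : ℂ) : ‖1 - (starRingEnd ℂ) a * w‖^2 - ‖w - a‖^2
    = (1 - ‖a‖^2) * (1 - ‖w‖^2) := by
  simp only [← Complex.normSq_eq_norm_sq, Complex.normSq_apply]
  simp
  ring

theorem mob_den_ne {a w : ℂ} (ha : ‖a‖ < 1) (hw : ‖w‖ ≤ 1) : 1 - (starRingEnd ℂ) a * w ≠ 0 := by
  intro h
  have h1 : (starRingEnd ℂ) a * w = 1 := (sub_eq_zero.1 h).symm
  have h2 : ‖a‖ * ‖w‖ = 1 := by
    have := congrArg norm h1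
    simpa using this
  nlinarith [norm_nonneg a, norm_nonneg w]

theorem localM' (f1 f2 h : ℂ → ℂ) (z0 : ℂ) (hf1 : AnalyticAt ℂ f1 z0) (hf2 : AnalyticAt ℂ f2 z0)
    (hh : AnalyticAt ℂ h z0) (h1 : ‖f1 z0‖ < 1) (h2 : ‖f2 z0‖ < 1)
    (hd : ∀ᶠ z in 𝓝 z0, deriv f1 z = h z * deriv f2 z)
    (hgt : 1 - ‖f1 z0‖^2 < ‖h z0‖ * (1 - ‖f2 z0‖^2))
    (hnc : ¬ ∀ᶠ z in 𝓝 z0, f2 z = f2 z0)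
    (hmax : ∀ᶠ z in 𝓝 z0, ‖h z‖ * (1 - ‖f2 z‖^2) * (1 - ‖f1 z0‖^2)
      ≤ ‖h z0‖ * (1 - ‖f2 z0‖^2) * (1 - ‖f1 z‖^2)) : False := by
  obtain ⟨a1, ha1⟩ : ∃ a, a = f1 z0 := ⟨_, rfl⟩
  obtain ⟨a2, ha2⟩ : ∃ a, a = f2 z0 := ⟨_, rfl⟩
  rw [← ha1] at h1 hgt hmax
  rw [← ha2] at h2 hgt hnc hmax
  have s1 : 0 < 1 - ‖a1‖^2 := by nlinarith [norm_nonneg a1]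
  have s2 : 0 < 1 - ‖a2‖^2 := by nlinarith [norm_nonneg a2]
  have n1 : ∀ᶠ z in 𝓝 z0, ‖f1 z‖ < 1 :=
    hf1.continuousAt.norm.eventually (gt_mem_nhds (by simpa [← ha1] using h1))
  have n2 : ∀ᶠ z in 𝓝 z0, ‖f2 z‖ < 1 :=
    hf2.continuousAt.norm.eventually (gt_mem_nhds (by simpa [← ha2] using h2))
  have d1 : 1 - (starRingEnd ℂ) a1 * f1 z0 ≠ 0 := mob_den_ne h1 n1.self_of_nhds.le
  have d2 : 1 - (starRingEnd ℂ) a2 * f2 z0 ≠ 0 := mob_den_ne h2 n2.self_of_nhds.le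
  have der : ∀ (f : ℂ → ℂ) (a z : ℂ), AnalyticAt ℂ f z → 1 - (starRingEnd ℂ) a * f z ≠ 0 →
      deriv (fun z => (f z - a) / (1 - (starRingEnd ℂ) a * f z)) z
        = deriv f z * (((1 - ‖a‖^2 : ℝ) : ℂ)) / (1 - (starRingEnd ℂ) a * f z)^2 := by
    intro f a z hf hne
    have hh := hf.differentiableAt.hasDerivAt
    have := ((hh.sub_const a).div ((hh.const_mul ((starRingEnd ℂ) a)).const_sub 1) hne).deriv
    refine Eq.trans this ?_
    congr 1
    have : ((‖a‖^2 : ℝ) : ℂ) = a * (starRingEnd ℂ) a := by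
      rw [Complex.mul_conj, Complex.normSq_eq_norm_sq]
    rw [Complex.ofReal_sub, this]
    push_cast
    ring
  have nrm : ∀ a w : ℂ, 1 - (starRingEnd ℂ) a * w ≠ 0 →
      1 - ‖(w - a) / (1 - (starRingEnd ℂ) a * w)‖^2
        = (1 - ‖a‖^2) * (1 - ‖w‖^2) / ‖1 - (starRingEnd ℂ) a * w‖^2 := by
    intro a w hne
    have : ‖1 - (starRingEnd ℂ) a * w‖ ≠ 0 := norm_ne_zero_iff.2 hne
    rw [← mob_id, norm_div, div_pow, sub_div, div_self (pow_ne_zero 2 this)]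
  have hc : ∀ a : ℂ, ‖a‖ < 1 → ‖1 - (starRingEnd ℂ) a * a‖ = 1 - ‖a‖^2 := by
    intro a ha
    have e : 1 - (starRingEnd ℂ) a * a = ((1 - ‖a‖^2 : ℝ) : ℂ) := by
      rw [mul_comm, Complex.mul_conj, Complex.normSq_eq_norm_sq]; push_cast; ring
    rw [e, Complex.norm_real, Real.norm_eq_abs, abs_of_pos]
    nlinarith [norm_nonneg a]
  have hz0 : ‖h z0 * ((((1 - ‖a1‖^2 : ℝ) : ℂ)) / (1 - (starRingEnd ℂ) a1 * f1 z0)^2)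
        * ((1 - (starRingEnd ℂ) a2 * f2 z0)^2 / (((1 - ‖a2‖^2 : ℝ) : ℂ)))‖
        = ‖h z0‖ * (1 - ‖a2‖^2) / (1 - ‖a1‖^2) := by
    rw [← ha1, ← ha2]
    simp only [norm_mul, norm_div, norm_pow, hc a1 h1, hc a2 h2, Complex.norm_real,
      Real.norm_eq_abs, abs_of_pos s1, abs_of_pos s2]
    field_simp
  refine localM (fun z => (f1 z - a1) / (1 - (starRingEnd ℂ) a1 * f1 z))
    (fun z => (f2 z - a2) / (1 - (starRingEnd ℂ) a2 * f2 z))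
    (fun z => h z * ((((1 - ‖a1‖^2 : ℝ) : ℂ)) / (1 - (starRingEnd ℂ) a1 * f1 z)^2)
        * ((1 - (starRingEnd ℂ) a2 * f2 z)^2 / (((1 - ‖a2‖^2 : ℝ) : ℂ)))) z0
    ?_ ?_ ?_ ?_ ?_ ?_ ?_ ?_ ?_
  · exact (hf1.sub analyticAt_const).div (analyticAt_const.sub (analyticAt_const.mul hf1)) d1
  · exact (hf2.sub analyticAt_const).div (analyticAt_const.sub (analyticAt_const.mul hf2)) d2
  · refine (hh.mul (analyticAt_const.div ((analyticAt_const.sub (analyticAt_const.mul hf1)).pow 2)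
      (pow_ne_zero 2 d1))).mul (((analyticAt_const.sub (analyticAt_const.mul hf2)).pow 2).div
      analyticAt_const ?_)
    exact_mod_cast s2.ne'
  · simp [ha1]
  · simp [ha2]
  · filter_upwards [hd, n1, n2, hf1.eventually_analyticAt, hf2.eventually_analyticAt]
      with z hd n1 n2 g1 g2
    have d1 := mob_den_ne h1 n1.le
    have d2 := mob_den_ne h2 n2.le
    rw [der f1 a1 z g1 d1, der f2 a2 z g2 d2, hd]
    have : (((1 - ‖a2‖^2 : ℝ) : ℂ)) ≠ 0 := by exact_mod_cast s2.ne'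
    field_simp
  · rw [hz0, lt_div_iff₀ s1]; linarith
  · intro hcon
    apply hnc
    filter_upwards [hcon, n2] with z hz n2
    have d2 := mob_den_ne h2 n2.le
    rcases div_eq_zero_iff.1 hz with h | h
    · exact sub_eq_zero.1 h
    · exact absurd h d2
  · filter_upwards [hmax, n1, n2] with z hm n1 n2
    have d1 := mob_den_ne h1 n1.le
    have d2 := mob_den_ne h2 n2.le
    rw [hz0, nrm a1 _ d1, nrm a2 _ d2]
    simp only [norm_mul, norm_div, norm_pow, Complex.norm_real,
      Real.norm_eq_abs, abs_of_pos s1, abs_of_pos s2]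
    have p1 : 0 < ‖1 - (starRingEnd ℂ) a1 * f1 z‖ := norm_pos_iff.2 d1
    have p2 : 0 < ‖1 - (starRingEnd ℂ) a2 * f2 z‖ := norm_pos_iff.2 d2
    have e1 : ‖h z‖ * ((1 - ‖a1‖ ^ 2) / ‖1 - (starRingEnd ℂ) a1 * f1 z‖ ^ 2) *
        (‖1 - (starRingEnd ℂ) a2 * f2 z‖ ^ 2 / (1 - ‖a2‖ ^ 2)) *
        ((1 - ‖a2‖ ^ 2) * (1 - ‖f2 z‖ ^ 2) / ‖1 - (starRingEnd ℂ) a2 * f2 z‖ ^ 2)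
        = (‖h z‖ * (1 - ‖f2 z‖^2) * (1 - ‖a1‖^2)) / ‖1 - (starRingEnd ℂ) a1 * f1 z‖ ^ 2 := by
      field_simp
    have e2 : ‖h z0‖ * (1 - ‖a2‖ ^ 2) / (1 - ‖a1‖ ^ 2) *
        ((1 - ‖a1‖ ^ 2) * (1 - ‖f1 z‖ ^ 2) / ‖1 - (starRingEnd ℂ) a1 * f1 z‖ ^ 2)
        = (‖h z0‖ * (1 - ‖a2‖ ^ 2) * (1 - ‖f1 z‖ ^ 2)) / ‖1 - (starRingEnd ℂ) a1 * f1 z‖ ^ 2 := by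
      field_simp
    rw [e1, e2]
    gcongr

open Polynomial in
/-- Package of the data attached to a finite Blaschke product `P / Q`. -/
structure BP (P Q : ℂ[X]) (E : ℂ → ℝ) : Prop where
  cont : Continuous E
  nonneg : ∀ z, ‖z‖ ≤ 1 → 0 ≤ E z
  pos' : ∀ z, ‖z‖ ≤ 1 → 0 < E z + ‖P.eval z‖^2
  qne : ∀ z, ‖z‖ ≤ 1 → Q.eval z ≠ 0
  dd : ∀ z, ‖Q.eval z‖^2 - ‖P.eval z‖^2 = (1 - ‖z‖^2) * E z
  circ : ∀ z, ‖z‖ = 1 → z * (derivative P * Q - P * derivative Q).eval z * ((‖Q.eval z‖^2 : ℝ) : ℂ)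
    = ((E z : ℝ) : ℂ) * (P.eval z * Q.eval z)

open Polynomial in
theorem bp_exists (n : ℕ) (η : ℂ) (hη : ‖η‖ = 1) (a : Fin n → ℂ) (ha : ∀ j, ‖a j‖ < 1) :
    ∃ (P Q : ℂ[X]) (E : ℂ → ℝ), BP P Q E ∧
      (∀ z, η * ∏ j, (a j - z) / (1 - (starRingEnd ℂ) (a j) * z) = P.eval z / Q.eval z) ∧
      (1 ≤ n → ∀ z, ‖z‖ ≤ 1 → 0 < E z) := by
  induction n with
  | zero =>
    refine ⟨C η, 1, fun _ => 0, ⟨continuous_const, ?_, ?_, ?_, ?_, ?_⟩, ?_, ?_⟩ <;> simp [hη]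
  | succ n ih =>
    obtain ⟨P, Q, E, hb, hB, -⟩ := ih (fun j => a j.castSucc) (fun j => ha _)
    set b := a (Fin.last n) with hbdef
    have hb1 : ‖b‖ < 1 := ha _
    have hq : ∀ z : ℂ, (1 - C ((starRingEnd ℂ) b) * X).eval z = 1 - (starRingEnd ℂ) b * z := by
      intro z; simp
    have hp : ∀ z : ℂ, (C b - X).eval z = b - z := by intro z; simp
    have s : 0 < 1 - ‖b‖^2 := by nlinarith [norm_nonneg b]
    have hmob : ∀ z, ‖1 - (starRingEnd ℂ) b * z‖^2 - ‖b - z‖^2 = (1 - ‖b‖^2) * (1 - ‖z‖^2) := by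
      intro z; rw [← mob_id, norm_sub_rev b z]
    have hpos : ∀ z, ‖z‖ ≤ 1 →
        0 < E z * ‖1 - (starRingEnd ℂ) b * z‖^2 + ‖P.eval z‖^2 * (1 - ‖b‖^2) := by
      intro z hz
      have h1 := hb.nonneg z hz
      have h2 := hb.pos' z hz
      have h3 : 0 < ‖1 - (starRingEnd ℂ) b * z‖^2 := by
        have := norm_pos_iff.2 (mob_den_ne hb1 hz); positivity
      rcases h1.eq_or_lt with h | h
      · rw [← h] at h2 ⊢
        rw [zero_add] at h2
        have := mul_pos h2 s
        linarith
      · have := mul_pos h h3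
        have : 0 ≤ ‖P.eval z‖^2 * (1 - ‖b‖^2) := by positivity
        linarith
    refine ⟨P * (C b - X), Q * (1 - C ((starRingEnd ℂ) b) * X),
      fun z => E z * ‖1 - (starRingEnd ℂ) b * z‖^2 + ‖P.eval z‖^2 * (1 - ‖b‖^2),
      ⟨?_, ?_, ?_, ?_, ?_, ?_⟩, ?_, ?_⟩
    · have := hb.cont
      have := P.continuous
      fun_prop
    · intro z hz; exact (hpos z hz).le
    · intro z hz
      have := hpos z hz
      positivity
    · intro z hz
      rw [eval_mul, hq]
      exact mul_ne_zero (hb.qne z hz) (mob_den_ne hb1 hz)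
    · intro z
      rw [eval_mul, eval_mul, hq, hp, norm_mul, norm_mul, mul_pow, mul_pow]
      have h1 := hb.dd z
      have h2 := hmob z
      linear_combination (‖1 - (starRingEnd ℂ) b * z‖^2) * h1 + ‖P.eval z‖^2 * h2
    · intro z hz
      have h1 := hb.dd z
      rw [hz] at h1
      have hPQ : ((‖P.eval z‖^2 : ℝ) : ℂ) = ((‖Q.eval z‖^2 : ℝ) : ℂ) := by
        congr 1; linarith
      have h2 := hb.circ z hz
      have hzz : z * (starRingEnd ℂ) z = 1 := by
        rw [Complex.mul_conj, Complex.normSq_eq_norm_sq, hz]; simp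
      have hbb : b * (starRingEnd ℂ) b = ((‖b‖^2 : ℝ) : ℂ) := by
        rw [Complex.mul_conj, Complex.normSq_eq_norm_sq]
      have hqq : ((‖1 - (starRingEnd ℂ) b * z‖^2 : ℝ) : ℂ)
          = (1 - (starRingEnd ℂ) b * z) * (1 - b * (starRingEnd ℂ) z) := by
        rw [← Complex.normSq_eq_norm_sq, ← Complex.mul_conj]; simp
      simp only [derivative_mul, eval_mul, eval_sub, eval_add, hq, hp, derivative_sub, derivative_C,
        derivative_X, derivative_one, norm_mul, mul_pow, eval_zero, eval_one, eval_C, eval_X] at h2 ⊢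
      push_cast at h2 hPQ hqq hbb ⊢
      rw [hqq, hPQ, ← hbb]
      generalize P.eval z = p at *
      generalize Q.eval z = q at *
      generalize (starRingEnd ℂ) z = zc at *
      generalize (starRingEnd ℂ) b = bc at *
      generalize ((E z : ℝ) : ℂ) = e at *
      generalize eval z (derivative P) = p' at *
      generalize eval z (derivative Q) = q' at *
      generalize ((‖q‖ : ℝ) : ℂ) = nq at *
      have e1 : z * (1 - b * zc) = z - b := by linear_combination (-b) * hzz
      linear_combination ((b - z) * (1 - bc * z)) * (1 - bc * z) * (1 - b * zc) * h2
        + (1 - bc * z) * p * q * nq^2 * (b * bc - 1) * e1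
    · intro z
      rw [Fin.prod_univ_castSucc, ← mul_assoc, hB z, eval_mul, eval_mul, hq, hp, mul_div_mul_comm]
    · intro _ z hz; exact hpos z hz

theorem vOrder_eq (f : ℂ → ℂ) (z : ℂ) (hf : AnalyticAt ℂ f z) :
    vOrder f z = analyticOrderAt f z := by
  apply ENat.eq_of_forall_natCast_le_iff
  intro n
  rw [natCast_le_analyticOrderAt_iff_iteratedDeriv_eq_zero hf, vOrder, le_sInf_iff]
  constructor
  · intro h i hi
    by_contra hne
    have := h i ⟨i, hne, rfl⟩
    have := Nat.cast_le.1 this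
    omega
  · rintro h _ ⟨m, hm, rfl⟩
    by_contra hlt
    push Not at hlt
    exact hm (h m (Nat.cast_lt.1 hlt))

open Polynomial in
theorem poly_an (P : ℂ[X]) (z : ℂ) : AnalyticAt ℂ (fun z => P.eval z) z :=
  P.differentiable.analyticAt z

open Polynomial in
theorem poly_ev_zero (P : ℂ[X]) (z : ℂ) (h : ∀ᶠ w in 𝓝 z, P.eval w = 0) : P = 0 := by
  apply P.eq_zero_of_infinite_isRoot
  exact infinite_of_mem_nhds z h

open Polynomial in
theorem deriv_quot (P Q : ℂ[X]) (z : ℂ) (hz : Q.eval z ≠ 0) :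
    deriv (fun z => P.eval z / Q.eval z) z
      = (derivative P * Q - P * derivative Q).eval z / (Q.eval z)^2 := by
  have := ((P.hasDerivAt z).div (Q.hasDerivAt z) hz).deriv
  refine Eq.trans this ?_
  simp

open Polynomial in
theorem BP.circ_norm {P Q : ℂ[X]} {E : ℂ → ℝ} (hb : BP P Q E) (z : ℂ) (hz : ‖z‖ = 1) :
    ‖(derivative P * Q - P * derivative Q).eval z‖ = E z := by
  have h1 := congrArg norm (hb.circ z hz)
  have h2 := hb.dd z
  have h3 := norm_pos_iff.2 (hb.qne z hz.le)
  have h4 := hb.nonneg z hz.le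
  rw [hz] at h2
  have h5 : ‖P.eval z‖ = ‖Q.eval z‖ := by
    rw [← sq_eq_sq₀ (norm_nonneg _) (norm_nonneg _)]; linarith
  rw [norm_mul, norm_mul, norm_mul, norm_mul, hz, h5, Complex.norm_real, Complex.norm_real,
    Real.norm_of_nonneg (by positivity), Real.norm_of_nonneg h4] at h1
  have h6 : ‖Q.eval z‖^2 ≠ 0 := by positivity
  apply mul_right_cancel₀ h6
  linarith

open Polynomial in
theorem BP.one_sub {P Q : ℂ[X]} {E : ℂ → ℝ} (hb : BP P Q E) (z : ℂ) (hz : ‖z‖ ≤ 1) :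
    1 - ‖P.eval z / Q.eval z‖^2 = (1 - ‖z‖^2) * E z / ‖Q.eval z‖^2 := by
  have h3 := norm_pos_iff.2 (hb.qne z hz)
  rw [← hb.dd, norm_div, div_pow, sub_div, div_self (by positivity)]

open Polynomial in
theorem BP.norm_lt {P Q : ℂ[X]} {E : ℂ → ℝ} (hb : BP P Q E) (z : ℂ) (hz : ‖z‖ < 1)
    (hE : 0 < E z) : ‖P.eval z / Q.eval z‖ < 1 := by
  have h := hb.one_sub z hz.le
  have h3 := norm_pos_iff.2 (hb.qne z hz.le)
  have h4 : 0 < 1 - ‖z‖^2 := by nlinarith [norm_nonneg z]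
  have : 0 < 1 - ‖P.eval z / Q.eval z‖^2 := by rw [h]; positivity
  by_contra hcon
  push Not at hcon
  nlinarith

open Polynomial in
theorem factor_out (W1 W2 : ℂ[X]) (h1 : ∀ z, ‖z‖ = 1 → W1.eval z ≠ 0)
    (h2 : ∀ z, ‖z‖ = 1 → W2.eval z ≠ 0)
    (ho : ∀ z, ‖z‖ < 1 → analyticOrderAt (fun z => W1.eval z) z
      = analyticOrderAt (fun z => W2.eval z) z) :
    ∃ G U1 U2 : ℂ[X], W1 = G * U1 ∧ W2 = G * U2 ∧ (∀ z, ‖z‖ ≤ 1 → U1.eval z ≠ 0) ∧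
      (∀ z, ‖z‖ ≤ 1 → U2.eval z ≠ 0) := by
  have hW1 : W1 ≠ 0 := by
    rintro rfl; exact h1 1 (by simp) (by simp)
  obtain ⟨U1, hU1⟩ := EuclideanDomain.gcd_dvd_left W1 W2
  obtain ⟨U2, hU2⟩ := EuclideanDomain.gcd_dvd_right W1 W2
  have hbez := EuclideanDomain.gcd_eq_gcd_ab W1 W2
  set G := EuclideanDomain.gcd W1 W2 with hG
  set A := EuclideanDomain.gcdA W1 W2
  set B := EuclideanDomain.gcdB W1 W2
  have hG0 : G ≠ 0 := by
    intro h; rw [h, zero_mul] at hU1; exact hW1 hU1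
  have hcop : U1 * A + U2 * B = 1 := by
    apply mul_left_cancel₀ hG0
    calc G * (U1 * A + U2 * B) = (G * U1) * A + (G * U2) * B := by ring
      _ = G * 1 := by rw [← hU1, ← hU2, mul_one]; exact hbez.symm
  have hord : ∀ z, ‖z‖ < 1 → analyticOrderAt (fun z => U1.eval z) z
      = analyticOrderAt (fun z => U2.eval z) z := by
    intro z hz
    have h := ho z hz
    have e1 : (fun z => W1.eval z) = (fun z => G.eval z) * (fun z => U1.eval z) := by
      funext z; rw [hU1]; simp
    have e2 : (fun z => W2.eval z) = (fun z => G.eval z) * (fun z => U2.eval z) := by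
      funext z; rw [hU2]; simp
    rw [e1, e2, analyticOrderAt_mul (poly_an G z) (poly_an U1 z),
      analyticOrderAt_mul (poly_an G z) (poly_an U2 z)] at h
    have ht : analyticOrderAt (fun z => G.eval z) z ≠ ⊤ := by
      intro ht
      exact hG0 (poly_ev_zero G z (analyticOrderAt_eq_top.1 ht))
    exact (ENat.add_right_injective_of_ne_top ht) h
  have hz12 : ∀ z, ‖z‖ < 1 → (U1.eval z ≠ 0 ∧ U2.eval z ≠ 0) := by
    intro z hz
    have h := hord z hz
    have hc := congrArg (eval z) hcop
    simp only [eval_add, eval_mul, eval_one] at hc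
    have hiff : U1.eval z ≠ 0 ↔ U2.eval z ≠ 0 := by
      rw [← (poly_an U1 z).analyticOrderAt_eq_zero, ← (poly_an U2 z).analyticOrderAt_eq_zero, h]
    by_cases hu : U1.eval z = 0
    · have : U2.eval z = 0 := by
        by_contra hne; exact hiff.2 hne hu
      rw [hu, this] at hc
      simp at hc
    · exact ⟨hu, hiff.1 hu⟩
  refine ⟨G, U1, U2, hU1, hU2, ?_, ?_⟩
  · intro z hz
    rcases hz.lt_or_eq with h | h
    · exact (hz12 z h).1
    · intro h0; apply h1 z h; rw [hU1, eval_mul, h0, mul_zero]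
  · intro z hz
    rcases hz.lt_or_eq with h | h
    · exact (hz12 z h).2
    · intro h0; apply h2 z h; rw [hU2, eval_mul, h0, mul_zero]

open Polynomial in
theorem max_ineq {P1 Q1 P2 Q2 : ℂ[X]} {E1 E2 : ℂ → ℝ} (b1 : BP P1 Q1 E1) (b2 : BP P2 Q2 E2)
    (hE1 : ∀ z, ‖z‖ ≤ 1 → 0 < E1 z) (hE2 : ∀ z, ‖z‖ ≤ 1 → 0 < E2 z) (G U1 U2 : ℂ[X])
    (hW1 : derivative P1 * Q1 - P1 * derivative Q1 = G * U1)
    (hW2 : derivative P2 * Q2 - P2 * derivative Q2 = G * U2)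
    (hU1 : ∀ z, ‖z‖ ≤ 1 → U1.eval z ≠ 0) (hU2 : ∀ z, ‖z‖ ≤ 1 → U2.eval z ≠ 0) :
    ∀ z, ‖z‖ ≤ 1 → ‖U1.eval z‖ * E2 z ≤ ‖U2.eval z‖ * E1 z := by
  set V : ℂ → ℝ := fun z => (‖U1.eval z‖ * E2 z) / (‖U2.eval z‖ * E1 z) with hV
  have pU1 : ∀ z, ‖z‖ ≤ 1 → 0 < ‖U1.eval z‖ := fun z hz => norm_pos_iff.2 (hU1 z hz)
  have pU2 : ∀ z, ‖z‖ ≤ 1 → 0 < ‖U2.eval z‖ := fun z hz => norm_pos_iff.2 (hU2 z hz)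
  have pden : ∀ z, ‖z‖ ≤ 1 → 0 < ‖U2.eval z‖ * E1 z := fun z hz =>
    mul_pos (pU2 z hz) (hE1 z hz)
  have hcont : ContinuousOn V (closedBall 0 1) := by
    apply ContinuousOn.div
    · exact (U1.continuous.norm.mul b2.cont).continuousOn
    · exact (U2.continuous.norm.mul b1.cont).continuousOn
    · intro z hz
      exact (pden z (by simpa using hz)).ne'
  obtain ⟨z0, hz0, hmax⟩ := (isCompact_closedBall (0:ℂ) 1).exists_isMaxOn ⟨0, by simp⟩ hcont
  rw [mem_closedBall_zero_iff] at hz0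
  suffices hle : ‖U1.eval z0‖ * E2 z0 ≤ ‖U2.eval z0‖ * E1 z0 by
    intro z hz
    have h1 : V z ≤ V z0 := hmax (mem_closedBall_zero_iff.2 hz)
    have h2 : V z0 ≤ 1 := (div_le_one (pden z0 hz0)).2 hle
    exact (div_le_one (pden z hz)).1 (h1.trans h2)
  by_contra hgt
  push Not at hgt
  have hlt : ‖z0‖ < 1 := by
    rcases hz0.lt_or_eq with h | h
    · exact h
    · exfalso
      have c1 := b1.circ_norm z0 h
      have c2 := b2.circ_norm z0 h
      rw [hW1, eval_mul, norm_mul] at c1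
      rw [hW2, eval_mul, norm_mul] at c2
      rw [← c1, ← c2] at hgt
      apply lt_irrefl _ (lt_of_lt_of_eq hgt _)
      ring
  have hnb : ∀ᶠ z in 𝓝 z0, ‖z‖ < 1 :=
    continuous_norm.continuousAt.eventually (gt_mem_nhds hlt)
  have q1 := b1.qne z0 hz0
  have q2 := b2.qne z0 hz0
  have ns : ∀ z : ℂ, ‖z‖ < 1 → 0 < 1 - ‖z‖^2 := fun z hz => by nlinarith [norm_nonneg z]
  refine localM' (fun z => P1.eval z / Q1.eval z) (fun z => P2.eval z / Q2.eval z)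
    (fun z => U1.eval z * (Q2.eval z)^2 / (U2.eval z * (Q1.eval z)^2)) z0
    ((poly_an P1 z0).div (poly_an Q1 z0) q1)
    ((poly_an P2 z0).div (poly_an Q2 z0) q2)
    (((poly_an U1 z0).mul ((poly_an Q2 z0).pow 2)).div ((poly_an U2 z0).mul ((poly_an Q1 z0).pow 2))
      (mul_ne_zero (hU2 z0 hz0) (pow_ne_zero 2 q1)))
    (b1.norm_lt z0 hlt (hE1 z0 hz0)) (b2.norm_lt z0 hlt (hE2 z0 hz0)) ?_ ?_ ?_ ?_
  · filter_upwards [hnb] with z hz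
    have q1 := b1.qne z hz.le
    have q2 := b2.qne z hz.le
    have u2 := hU2 z hz.le
    rw [deriv_quot _ _ _ q1, deriv_quot _ _ _ q2, hW1, hW2, eval_mul, eval_mul]
    field_simp
  · rw [b1.one_sub z0 hz0, b2.one_sub z0 hz0]
    simp only [norm_div, norm_mul, norm_pow]
    have n1 := norm_pos_iff.2 q1
    have n2 := norm_pos_iff.2 q2
    have n3 := pU2 z0 hz0
    have n4 := ns z0 hlt
    have e : ‖U1.eval z0‖ * ‖Q2.eval z0‖^2 / (‖U2.eval z0‖ * ‖Q1.eval z0‖^2) *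
        ((1 - ‖z0‖^2) * E2 z0 / ‖Q2.eval z0‖^2)
        = (1 - ‖z0‖^2) * (‖U1.eval z0‖ * E2 z0 / ‖U2.eval z0‖) / ‖Q1.eval z0‖^2 := by
      field_simp
    rw [e]
    have : E1 z0 < ‖U1.eval z0‖ * E2 z0 / ‖U2.eval z0‖ := by
      rw [lt_div_iff₀ n3]; linarith
    gcongr
  · intro hcon
    have hev : ∀ᶠ z in 𝓝 z0, (derivative P2 * Q2 - P2 * derivative Q2).eval z = 0 := by
      filter_upwards [hcon.eventually_nhds, hnb] with z hz hz1
      have q2 := b2.qne z hz1.le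
      have hd := deriv_quot P2 Q2 z q2
      have hzz : (fun z => P2.eval z / Q2.eval z) =ᶠ[𝓝 z]
        (fun _ => P2.eval z0 / Q2.eval z0) := hz
      rw [hzz.deriv_eq, deriv_const] at hd
      rcases div_eq_zero_iff.1 hd.symm with h | h
      · exact h
      · exact absurd h (pow_ne_zero 2 q2)
    have h0 := poly_ev_zero _ _ hev
    have c2 := b2.circ_norm 1 (by simp)
    rw [h0] at c2
    have := hE2 1 (by simp)
    simp at c2
    linarith
  · filter_upwards [hnb] with z hz
    have q1' := b1.qne z hz.le
    have q2' := b2.qne z hz.le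
    rw [b1.one_sub z0 hz0, b2.one_sub z0 hz0, b1.one_sub z hz.le, b2.one_sub z hz.le]
    simp only [norm_div, norm_mul, norm_pow]
    have n1 := norm_pos_iff.2 q1
    have n2 := norm_pos_iff.2 q2
    have n3 := pU2 z0 hz0
    have n4 := ns z0 hlt
    have m1 := norm_pos_iff.2 q1'
    have m2 := norm_pos_iff.2 q2'
    have m3 := pU2 z hz.le
    have m4 := ns z hz
    have hm : V z ≤ V z0 := hmax (mem_closedBall_zero_iff.2 hz.le)
    have k1 := hE1 z hz.le
    have k0 := hE1 z0 hz0
    have e1 : ‖U1.eval z‖ * ‖Q2.eval z‖^2 / (‖U2.eval z‖ * ‖Q1.eval z‖^2) *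
        ((1 - ‖z‖^2) * E2 z / ‖Q2.eval z‖^2) * ((1 - ‖z0‖^2) * E1 z0 / ‖Q1.eval z0‖^2)
        = V z * ((1 - ‖z‖^2) * (1 - ‖z0‖^2) * E1 z * E1 z0 / (‖Q1.eval z‖^2 * ‖Q1.eval z0‖^2)) := by
      simp only [hV]
      field_simp
    have e2 : ‖U1.eval z0‖ * ‖Q2.eval z0‖^2 / (‖U2.eval z0‖ * ‖Q1.eval z0‖^2) *
        ((1 - ‖z0‖^2) * E2 z0 / ‖Q2.eval z0‖^2) * ((1 - ‖z‖^2) * E1 z / ‖Q1.eval z‖^2)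
        = V z0 * ((1 - ‖z‖^2) * (1 - ‖z0‖^2) * E1 z * E1 z0 / (‖Q1.eval z‖^2 * ‖Q1.eval z0‖^2)) := by
      simp only [hV]
      field_simp
    rw [e1, e2]
    gcongr

open Polynomial in
theorem evalL (P : ℂ[X]) (z w : ℂ) :
    MvPolynomial.eval ![z, w] (aeval (MvPolynomial.X 0 : MvPolynomial (Fin 2) ℂ) P) = P.eval z := by
  rw [← MvPolynomial.coe_aeval_eq_eval, RingHom.coe_coe, ← Polynomial.aeval_algHom_apply]
  simp [Polynomial.aeval_def]

open Polynomial in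
theorem evalR (P : ℂ[X]) (z w : ℂ) :
    MvPolynomial.eval ![z, (starRingEnd ℂ) w]
      (aeval (MvPolynomial.X 1 : MvPolynomial (Fin 2) ℂ) (P.map (starRingEnd ℂ)))
      = (starRingEnd ℂ) (P.eval w) := by
  rw [← MvPolynomial.coe_aeval_eq_eval, RingHom.coe_coe, ← Polynomial.aeval_algHom_apply]
  simp [Polynomial.aeval_def, Polynomial.eval₂_map, Polynomial.eval₂_at_apply]

theorem nsq (z : ℂ) : z * (starRingEnd ℂ) z = ((‖z‖ : ℝ) : ℂ)^2 := by
  rw [Complex.mul_conj, Complex.normSq_eq_norm_sq]; push_cast; rfl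

open Polynomial in
theorem pol1 (F H : ℂ[X]) (h : ∀ z, ‖z‖ < 1 → ‖F.eval z‖ = ‖H.eval z‖) :
    ∃ ε : ℂ, ‖ε‖ = 1 ∧ ∀ z, ‖z‖ < 1 → F.eval z = ε * H.eval z := by
  by_cases h0 : ∀ z, ‖z‖ < 1 → H.eval z = 0
  · refine ⟨1, by simp, fun z hz => ?_⟩
    have h1 := h z hz
    rw [h0 z hz, norm_zero, norm_eq_zero] at h1
    rw [h1, h0 z hz]; simp
  · push Not at h0
    obtain ⟨w, hw, hne⟩ := h0
    have key := polarize
      (aeval (MvPolynomial.X 0) F * aeval (MvPolynomial.X 1) (F.map (starRingEnd ℂ))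
        - aeval (MvPolynomial.X 0) H * aeval (MvPolynomial.X 1) (H.map (starRingEnd ℂ)))
      (fun z hz => by
        rw [map_sub, map_mul, map_mul, evalL, evalL, evalR, evalR, nsq, nsq, h z hz, sub_self])
    have hF : F.eval w ≠ 0 := by
      rw [← norm_ne_zero_iff, h w hw]; exact norm_ne_zero_iff.2 hne
    have hFc : (starRingEnd ℂ) (F.eval w) ≠ 0 := (_root_.map_ne_zero _).2 hF
    refine ⟨(starRingEnd ℂ) (H.eval w) / (starRingEnd ℂ) (F.eval w), ?_, fun z hz => ?_⟩
    · rw [norm_div, RCLike.norm_conj, RCLike.norm_conj, h w hw, div_self (norm_ne_zero_iff.2 hne)]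
    · have k := key z ((starRingEnd ℂ) w)
      rw [map_sub, map_mul, map_mul, evalL, evalL, evalR, evalR] at k
      field_simp
      linear_combination k

open Polynomial in
theorem pol2 (U1 U2 A1 A2 B1 B2 : ℂ[X])
    (h : ∀ z, ‖z‖ < 1 → ‖U1.eval z‖ * (‖B2.eval z‖^2 - ‖A2.eval z‖^2)
      = ‖U2.eval z‖ * (‖B1.eval z‖^2 - ‖A1.eval z‖^2))
    (h1 : A1.eval 0 = 0) (h2 : A2.eval 0 = 0)
    (hU1 : ∀ z, ‖z‖ < 1 → U1.eval z ≠ 0) (hU2 : ∀ z, ‖z‖ < 1 → U2.eval z ≠ 0)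
    (hB1 : ∀ z, ‖z‖ < 1 → B1.eval z ≠ 0) (hB2 : ∀ z, ‖z‖ < 1 → B2.eval z ≠ 0) :
    ∀ z, ‖z‖ < 1 → ‖(A2 * B1).eval z‖ = ‖(A1 * B2).eval z‖ := by
  have key := polarize
      (aeval (MvPolynomial.X 0) U1 * aeval (MvPolynomial.X 1) (U1.map (starRingEnd ℂ))
        * (aeval (MvPolynomial.X 0) B2 * aeval (MvPolynomial.X 1) (B2.map (starRingEnd ℂ))
        - aeval (MvPolynomial.X 0) A2 * aeval (MvPolynomial.X 1) (A2.map (starRingEnd ℂ)))^2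
        - aeval (MvPolynomial.X 0) U2 * aeval (MvPolynomial.X 1) (U2.map (starRingEnd ℂ))
        * (aeval (MvPolynomial.X 0) B1 * aeval (MvPolynomial.X 1) (B1.map (starRingEnd ℂ))
        - aeval (MvPolynomial.X 0) A1 * aeval (MvPolynomial.X 1) (A1.map (starRingEnd ℂ)))^2)
      (fun z hz => by
        simp only [map_sub, map_mul, map_pow, evalL, evalR, nsq]
        have h' := congrArg (fun t : ℝ => (t : ℂ)) (h z hz)
        push_cast at h'
        rw [← mul_pow, ← mul_pow, h', sub_self])
  intro z hz
  have k := key z ((starRingEnd ℂ) 0)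
  simp only [map_sub, map_mul, map_pow, evalL, evalR] at k
  simp only [h1, h2, map_zero, mul_zero, sub_zero] at k
  have k := congrArg norm (sub_eq_zero.1 k)
  simp only [norm_mul, norm_pow, RCLike.norm_conj] at k
  have k0 := h 0 (by simp)
  rw [h1, h2] at k0
  simp only [norm_zero, ne_eq, OfNat.ofNat_ne_zero, not_false_eq_true, zero_pow, sub_zero] at k0
  have z0 : ‖(0:ℂ)‖ < 1 := by simp
  have kz := h z hz
  rw [eval_mul, eval_mul, norm_mul, norm_mul]
  have p1 := norm_pos_iff.2 (hU1 z hz)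
  have p2 := norm_pos_iff.2 (hU2 z hz)
  have p3 := norm_pos_iff.2 (hU1 0 z0)
  have p4 := norm_pos_iff.2 (hB2 0 z0)
  generalize ‖U1.eval z‖ = u1 at *
  generalize ‖U2.eval z‖ = u2 at *
  generalize ‖U1.eval 0‖ = u10 at *
  generalize ‖U2.eval 0‖ = u20 at *
  have na1 := norm_nonneg (A1.eval z)
  have na2 := norm_nonneg (A2.eval z)
  have nb1 := norm_nonneg (B1.eval z)
  have nb2 := norm_nonneg (B2.eval z)
  generalize ‖A1.eval z‖ = α1 at *
  generalize ‖A2.eval z‖ = α2 at *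
  generalize ‖B1.eval z‖ = β1 at *
  generalize ‖B2.eval z‖ = β2 at *
  generalize ‖B1.eval 0‖ = β10 at *
  generalize ‖B2.eval 0‖ = β20 at *
  have e1 : u1 * β2^2 = u2 * β1^2 := by
    have hne : u10 * β20^2 ≠ 0 := by positivity
    apply mul_right_cancel₀ hne
    linear_combination k - u2 * β1^2 * k0
  have e2 : u1 * α2^2 = u2 * α1^2 := by linarith
  have e3 : (α2 * β1)^2 = (α1 * β2)^2 := by
    have hne : u1 * u2 ≠ 0 := by positivity
    apply mul_right_cancel₀ hne
    linear_combination u2 * β1^2 * e2 - u2 * α1^2 * e1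
  exact (sq_eq_sq₀ (by positivity) (by positivity)).1 e3

theorem mob_final (b1 b2 ε : ℂ) (h1 : ‖b1‖ < 1) (h2 : ‖b2‖ < 1) (hε : ‖ε‖ = 1) :
    ∃ (τ z₀ : ℂ), ‖τ‖ = 1 ∧ ‖z₀‖ < 1 ∧ ∀ x y : ℂ, ‖x‖ < 1 →
      (y - b2) * (1 - (starRingEnd ℂ) b1 * x) = ε * ((x - b1) * (1 - (starRingEnd ℂ) b2 * y)) →
      y = τ * (z₀ - x) / (1 - (starRingEnd ℂ) z₀ * x) := by
  have hee : ε * (starRingEnd ℂ) ε = 1 := by rw [nsq, hε]; simp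
  have hε0 : ε ≠ 0 := by rintro rfl; simp at hε
  have hlt : ‖ε * b1 - b2‖ < ‖ε - b2 * (starRingEnd ℂ) b1‖ := by
    have hid := mob_id b1 ((starRingEnd ℂ) ε * b2)
    have e1 : ‖(starRingEnd ℂ) ε * b2 - b1‖ = ‖ε * b1 - b2‖ := by
      have : ε * b1 - b2 = - ε * ((starRingEnd ℂ) ε * b2 - b1) := by linear_combination b2 * hee
      rw [this, norm_mul, norm_neg, hε, one_mul]
    have e2 : ‖1 - (starRingEnd ℂ) b1 * ((starRingEnd ℂ) ε * b2)‖
        = ‖ε - b2 * (starRingEnd ℂ) b1‖ := by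
      have : ε - b2 * (starRingEnd ℂ) b1
          = ε * (1 - (starRingEnd ℂ) b1 * ((starRingEnd ℂ) ε * b2)) := by
        linear_combination b2 * (starRingEnd ℂ) b1 * hee
      rw [this, norm_mul, hε, one_mul]
    rw [e1, e2, norm_mul, RCLike.norm_conj, hε, one_mul] at hid
    have s1 : 0 < 1 - ‖b1‖^2 := by nlinarith [norm_nonneg b1]
    have s2 : 0 < 1 - ‖b2‖^2 := by nlinarith [norm_nonneg b2]
    have := mul_pos s1 s2
    exact lt_of_pow_lt_pow_left₀ 2 (norm_nonneg _) (by linarith)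
  set M := ε - b2 * (starRingEnd ℂ) b1 with hM
  have hMp : 0 < ‖M‖ := lt_of_le_of_lt (norm_nonneg _) hlt
  have hM0 : M ≠ 0 := norm_pos_iff.1 hMp
  have hMc : (starRingEnd ℂ) M ≠ 0 := (map_ne_zero _).2 hM0
  have hz : ‖(ε * b1 - b2) / M‖ < 1 := by rw [norm_div]; exact (div_lt_one hMp).2 hlt
  refine ⟨-M / (ε * (starRingEnd ℂ) M), (ε * b1 - b2) / M, ?_, hz, ?_⟩
  · rw [norm_div, norm_mul, norm_neg, RCLike.norm_conj, hε, one_mul, div_self hMp.ne']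
  · intro x y hx hxy
    rw [eq_div_iff (mob_den_ne hz hx.le)]
    simp only [map_div₀, map_sub, map_mul]
    have hMc' : (starRingEnd ℂ) M = (starRingEnd ℂ) ε - (starRingEnd ℂ) b2 * b1 := by
      simp [hM]
    have l : y * (1 - ((starRingEnd ℂ) ε * (starRingEnd ℂ) b1 - (starRingEnd ℂ) b2)
        / (starRingEnd ℂ) M * x) * (ε * (starRingEnd ℂ) M)
        = y * ε * ((starRingEnd ℂ) M -
          ((starRingEnd ℂ) ε * (starRingEnd ℂ) b1 - (starRingEnd ℂ) b2) * x) := by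
      field_simp
    have r : -M / (ε * (starRingEnd ℂ) M) * ((ε * b1 - b2) / M - x) * (ε * (starRingEnd ℂ) M)
        = -((ε * b1 - b2) - M * x) := by
      field_simp
    apply mul_right_cancel₀ (mul_ne_zero hε0 hMc)
    rw [l, r, hMc', hM]
    linear_combination hxy + (y - y * (starRingEnd ℂ) b1 * x) * hee

open Polynomial in
theorem heins_core {P1 Q1 P2 Q2 : ℂ[X]} {E1 E2 : ℂ → ℝ} (b1 : BP P1 Q1 E1) (b2 : BP P2 Q2 E2)
    (hE1 : ∀ z, ‖z‖ ≤ 1 → 0 < E1 z) (hE2 : ∀ z, ‖z‖ ≤ 1 → 0 < E2 z)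
    (ho : ∀ z, ‖z‖ < 1 →
      analyticOrderAt (fun z => (derivative P1 * Q1 - P1 * derivative Q1).eval z) z
      = analyticOrderAt (fun z => (derivative P2 * Q2 - P2 * derivative Q2).eval z) z) :
    ∃ (τ z₀ : ℂ), ‖τ‖ = 1 ∧ ‖z₀‖ < 1 ∧ ∀ z, ‖z‖ < 1 →
      P2.eval z / Q2.eval z = τ * (z₀ - P1.eval z / Q1.eval z)
        / (1 - (starRingEnd ℂ) z₀ * (P1.eval z / Q1.eval z)) := by
  obtain ⟨G, U1, U2, hW1, hW2, hU1, hU2⟩ := factor_out _ _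
    (fun z hz => by
      rw [← norm_pos_iff, b1.circ_norm z hz]; exact hE1 z hz.le)
    (fun z hz => by
      rw [← norm_pos_iff, b2.circ_norm z hz]; exact hE2 z hz.le) ho
  have heq : ∀ z, ‖z‖ ≤ 1 → ‖U1.eval z‖ * E2 z = ‖U2.eval z‖ * E1 z := fun z hz =>
    le_antisymm (max_ineq b1 b2 hE1 hE2 G U1 U2 hW1 hW2 hU1 hU2 z hz)
      (max_ineq b2 b1 hE2 hE1 G U2 U1 hW2 hW1 hU2 hU1 z hz)
  have n1 : ∀ z, ‖z‖ < 1 → ‖P1.eval z / Q1.eval z‖ < 1 := fun z hz => b1.norm_lt z hz (hE1 z hz.le)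
  have n2 : ∀ z, ‖z‖ < 1 → ‖P2.eval z / Q2.eval z‖ < 1 := fun z hz => b2.norm_lt z hz (hE2 z hz.le)
  have z0 : ‖(0:ℂ)‖ < 1 := by simp
  obtain ⟨β1, hβ1⟩ : ∃ b, b = P1.eval 0 / Q1.eval 0 := ⟨_, rfl⟩
  obtain ⟨β2, hβ2⟩ : ∃ b, b = P2.eval 0 / Q2.eval 0 := ⟨_, rfl⟩
  have m1 := n1 0 z0
  have m2 := n2 0 z0
  rw [← hβ1] at m1
  rw [← hβ2] at m2
  have s1 : 0 < 1 - ‖β1‖^2 := by nlinarith [norm_nonneg β1]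
  have s2 : 0 < 1 - ‖β2‖^2 := by nlinarith [norm_nonneg β2]
  have fA : ∀ (P Q : ℂ[X]) (b z : ℂ), Q.eval z ≠ 0 →
      (P - C b * Q).eval z = Q.eval z * (P.eval z / Q.eval z - b) := by
    intro P Q b z hq; simp; field_simp
  have fB : ∀ (P Q : ℂ[X]) (b z : ℂ), Q.eval z ≠ 0 →
      (Q - C ((starRingEnd ℂ) b) * P).eval z
        = Q.eval z * (1 - (starRingEnd ℂ) b * (P.eval z / Q.eval z)) := by
    intro P Q b z hq; simp; field_simp
  have fD : ∀ (P Q : ℂ[X]) (E : ℂ → ℝ) (b z : ℂ), BP P Q E → ‖z‖ < 1 →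
      ‖(Q - C ((starRingEnd ℂ) b) * P).eval z‖^2 - ‖(P - C b * Q).eval z‖^2
        = (1 - ‖b‖^2) * ((1 - ‖z‖^2) * E z) := by
    intro P Q E b z hb hz
    have hq := hb.qne z hz.le
    have h1 := hb.one_sub z hz.le
    have hqn := norm_pos_iff.2 hq
    rw [fA P Q b z hq, fB P Q b z hq, norm_mul, norm_mul, mul_pow, mul_pow, ← mul_sub, mob_id, h1]
    field_simp
  have hn := pol2 (C (((1 - ‖β1‖^2 : ℝ) : ℂ)) * U1) (C (((1 - ‖β2‖^2 : ℝ) : ℂ)) * U2)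
    (P1 - C β1 * Q1) (P2 - C β2 * Q2) (Q1 - C ((starRingEnd ℂ) β1) * P1)
    (Q2 - C ((starRingEnd ℂ) β2) * P2)
    (fun z hz => by
      rw [fD P1 Q1 E1 β1 z b1 hz, fD P2 Q2 E2 β2 z b2 hz, eval_mul, eval_mul, eval_C, eval_C,
        norm_mul, norm_mul, Complex.norm_real, Complex.norm_real, Real.norm_of_nonneg s1.le,
        Real.norm_of_nonneg s2.le]
      linear_combination (1 - ‖β1‖^2) * (1 - ‖β2‖^2) * (1 - ‖z‖^2) * heq z hz.le)
    (by rw [fA _ _ _ _ (b1.qne 0 z0.le), ← hβ1, sub_self, mul_zero])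
    (by rw [fA _ _ _ _ (b2.qne 0 z0.le), ← hβ2, sub_self, mul_zero])
    (fun z hz => by
      rw [eval_mul, eval_C]
      exact mul_ne_zero (Complex.ofReal_ne_zero.2 s1.ne') (hU1 z hz.le))
    (fun z hz => by
      rw [eval_mul, eval_C]
      exact mul_ne_zero (Complex.ofReal_ne_zero.2 s2.ne') (hU2 z hz.le))
    (fun z hz => by
      rw [fB _ _ _ _ (b1.qne z hz.le)]
      exact mul_ne_zero (b1.qne z hz.le) (mob_den_ne m1 (n1 z hz).le))
    (fun z hz => by
      rw [fB _ _ _ _ (b2.qne z hz.le)]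
      exact mul_ne_zero (b2.qne z hz.le) (mob_den_ne m2 (n2 z hz).le))
  obtain ⟨ε, hε, hFH⟩ := pol1 _ _ hn
  obtain ⟨τ, w, hτ, hw, hfin⟩ := mob_final β1 β2 ε m1 m2 hε
  refine ⟨τ, w, hτ, hw, fun z hz => hfin _ _ (n1 z hz) ?_⟩
  have h := hFH z hz
  have q1 := b1.qne z hz.le
  have q2 := b2.qne z hz.le
  rw [eval_mul, eval_mul, fA _ _ _ _ q1, fA _ _ _ _ q2, fB _ _ _ _ q1, fB _ _ _ _ q2] at h
  apply mul_left_cancel₀ (mul_ne_zero q1 q2)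
  linear_combination h

open Polynomial in
theorem order_eq (P Q : ℂ[X]) (B : ℂ → ℂ) (hB : B = fun z => P.eval z / Q.eval z) (w : ℂ)
    (hq : Q.eval w ≠ 0) :
    vOrder (deriv B) w
      = analyticOrderAt (fun z => (derivative P * Q - P * derivative Q).eval z) w := by
  have hBa : AnalyticAt ℂ B w := by
    rw [hB]; exact (poly_an P w).div (poly_an Q w) hq
  rw [vOrder_eq _ _ hBa.deriv]
  have hev : deriv B =ᶠ[𝓝 w] (fun z => (derivative P * Q - P * derivative Q).eval z)
      * (fun z => ((Q.eval z)^2)⁻¹) := by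
    filter_upwards [Q.continuous.continuousAt.eventually_ne hq] with z hz
    rw [hB, deriv_quot _ _ _ hz]
    rfl
  have ha : AnalyticAt ℂ (fun z => ((Q.eval z)^2)⁻¹) w :=
    ((poly_an Q w).pow 2).inv (pow_ne_zero 2 hq)
  rw [analyticOrderAt_congr hev, analyticOrderAt_mul (poly_an _ w) ha,
    ha.analyticOrderAt_eq_zero.2 (inv_ne_zero (pow_ne_zero 2 hq)), add_zero]

/-- **Heins' theorem (uniqueness).** If two finite Blaschke products `B₁`, `B₂` of the
same degree `n` have derivatives with exactly the same zeros in the open unit disk,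
with the same multiplicities, then `B₂ = T ∘ B₁` on the disk for some conformal
automorphism `T` of the disk. -/
theorem heins_uniqueness (n : ℕ) (η₁ η₂ : ℂ) (a₁ a₂ : Fin n → ℂ)
    (hη₁ : ‖η₁‖ = 1) (hη₂ : ‖η₂‖ = 1)
    (ha₁ : ∀ j, ‖a₁ j‖ < 1) (ha₂ : ∀ j, ‖a₂ j‖ < 1)
    (B₁ B₂ : ℂ → ℂ)
    (hB₁ : ∀ z, B₁ z = η₁ * ∏ j, (a₁ j - z) / (1 - (starRingEnd ℂ) (a₁ j) * z))
    (hB₂ : ∀ z, B₂ z = η₂ * ∏ j, (a₂ j - z) / (1 - (starRingEnd ℂ) (a₂ j) * z))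
    (hcrit : ∀ w ∈ Metric.ball (0 : ℂ) 1, vOrder (deriv B₁) w = vOrder (deriv B₂) w) :
    ∃ (τ : ℂ) (z₀ : ℂ), ‖τ‖ = 1 ∧ ‖z₀‖ < 1 ∧
      ∀ z ∈ Metric.ball (0 : ℂ) 1,
        B₂ z = τ * (z₀ - B₁ z) / (1 - (starRingEnd ℂ) z₀ * B₁ z) := by
  rcases Nat.eq_zero_or_pos n with hn | hn
  · subst hn
    have hne : η₁ ≠ 0 := by rintro rfl; simp at hη₁
    refine ⟨-η₂ / η₁, 0, by simp [hη₁, hη₂], by simp, fun z _ => ?_⟩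
    rw [hB₁, hB₂]
    simp
    field_simp
  · obtain ⟨P1, Q1, E1, b1, e1, hE1⟩ := bp_exists n η₁ hη₁ a₁ ha₁
    obtain ⟨P2, Q2, E2, b2, e2, hE2⟩ := bp_exists n η₂ hη₂ a₂ ha₂
    have f1 : B₁ = fun z => P1.eval z / Q1.eval z := by
      funext z; rw [hB₁, e1]
    have f2 : B₂ = fun z => P2.eval z / Q2.eval z := by
      funext z; rw [hB₂, e2]
    obtain ⟨τ, z₀, hτ, hz₀, h⟩ := heins_core b1 b2 (hE1 hn) (hE2 hn) (fun z hz => by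
      rw [← order_eq P1 Q1 B₁ f1 z (b1.qne z hz.le), ← order_eq P2 Q2 B₂ f2 z (b2.qne z hz.le)]
      exact hcrit z (mem_ball_zero_iff.2 hz))
    refine ⟨τ, z₀, hτ, hz₀, fun z hz => ?_⟩
    rw [f1, f2]
    exact h z (mem_ball_zero_iff.1 hz)
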